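/- arXiv:1108.4980 — 2 statements merged into one kernel-verified Lean document; each statement's English description precedes it below -/
import Mathlib

section
/- For every real q with 0 < q < 1, Π_{n=0}^{∞} (1 + √3 · q^{2n+1} + q^{4n+2}) / (1 − √3 · q^{2n+1} + q^{4n+2}) = ( −φ(−q⁴) + 3φ(−q³⁶) + 2√3 · q · f(−q²⁴) ) / ( −φ(−q⁴) + 3φ(−q³⁶) − 2√3 · q · f(−q²⁴) ), the denominator on the right-hand side being nonzero. -/
/-- Ramanujan's theta function `φ(q) = ∑_{n ∈ ℤ} q^{n²}`. -/
noncomputable def phi (q : ℝ) : ℝ := ∑' n : ℤ, q ^ (n ^ 2)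

/-- Ramanujan's function `f(-q) = ∏_{m=1}^∞ (1 - q^m)`, as a function of `q`. -/
noncomputable def fneg (q : ℝ) : ℝ := ∏' m : ℕ, (1 - q ^ (m + 1))

open Filter Topology

lemma hasSum_cg {α : Type*} {E : Type*} [NormedField E] {f g : α → E} {a b : E} (hf : HasSum f a)
    (h : ∀ k, g k = f k) (hab : b = a) : HasSum g b := by
  rw [funext h, hab]; exact hf

/-- Finite Pochhammer product `∏_{k<n} (1 - p^{2k+2})`. -/
noncomputable def poch (p : ℝ) (n : ℕ) : ℝ := ∏ k ∈ Finset.range n, (1 - p ^ (2 * k + 2))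

/-- Reciprocal of `poch`, extended by zero to negative integers. -/
noncomputable def rpoch (p : ℝ) (m : ℤ) : ℝ := if 0 ≤ m then (poch p m.toNat)⁻¹ else 0

lemma fac_pos {p : ℝ} (h0 : 0 < p) (h1 : p < 1) (k : ℕ) : 0 < 1 - p ^ (2 * k + 2) := by
  have := pow_lt_one₀ h0.le h1 (n := 2 * k + 2) (by omega)
  linarith

lemma poch_pos {p : ℝ} (h0 : 0 < p) (h1 : p < 1) (n : ℕ) : 0 < poch p n :=
  Finset.prod_pos fun k _ => fac_pos h0 h1 k

lemma poch_succ (p : ℝ) (n : ℕ) : poch p (n + 1) = poch p n * (1 - p ^ (2 * n + 2)) := by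
  simp [poch, Finset.prod_range_succ]

lemma poch_anti {p : ℝ} (h0 : 0 < p) (h1 : p < 1) : Antitone (poch p) := by
  refine antitone_nat_of_succ_le fun n => ?_
  rw [poch_succ]
  have := poch_pos h0 h1 n
  have : 0 < p ^ (2 * n + 2) := by positivity
  nlinarith

lemma poch_le_one {p : ℝ} (h0 : 0 < p) (h1 : p < 1) (n : ℕ) : poch p n ≤ 1 := by
  have := poch_anti h0 h1 (Nat.zero_le n)
  simpa [poch] using this

lemma summable_odd {p : ℝ} (h0 : 0 < p) (h1 : p < 1) (a b : ℕ) (ha : 0 < a) :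
    Summable (fun k : ℕ => p ^ (a * k + b)) := by
  have : Summable (fun k : ℕ => (p ^ a) ^ k * p ^ b) :=
    (summable_geometric_of_lt_one (by positivity)
      (pow_lt_one₀ h0.le h1 (by omega))).mul_right _
  refine this.congr fun k => ?_
  rw [pow_add, pow_mul]

lemma poch_lim {p : ℝ} (h0 : 0 < p) (h1 : p < 1) :
    ∃ L : ℝ, 0 < L ∧ Tendsto (poch p) atTop (𝓝 L) ∧ ∀ n, L ≤ poch p n := by
  have hs : Summable (fun k : ℕ => ‖-(p ^ (2 * k + 2))‖) := by
    refine (summable_odd h0 h1 2 2 (by norm_num)).congr fun k => ?_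
    rw [norm_neg, Real.norm_of_nonneg (by positivity)]
  have hm := (multipliable_one_add_of_summable hs).hasProd.tendsto_prod_nat
  have hne := tprod_one_add_ne_zero_of_summable (f := fun k : ℕ => -(p ^ (2 * k + 2)))
    (fun k => by have := fac_pos h0 h1 k; simp only [← sub_eq_add_neg]; exact this.ne') hs
  have ht : Tendsto (poch p) atTop (𝓝 (∏' k : ℕ, (1 + -(p ^ (2 * k + 2))))) := by
    refine hm.congr fun n => ?_
    simp [poch, sub_eq_add_neg]
  refine ⟨_, lt_of_le_of_ne ?_ (Ne.symm hne), ht, (poch_anti h0 h1).le_of_tendsto ht⟩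
  exact ge_of_tendsto' ht fun n => (poch_pos h0 h1 n).le

lemma rpoch_rec {p : ℝ} (h0 : 0 < p) (h1 : p < 1) (m : ℤ) :
    rpoch p m = (1 - p ^ (2 * m + 2)) * rpoch p (m + 1) := by
  rcases lt_trichotomy m (-1) with h | h | h
  · simp [rpoch, show ¬ (0 ≤ m) by omega, show ¬ (0 ≤ m + 1) by omega]
  · subst h; simp [rpoch]
  · obtain ⟨n, rfl⟩ := Int.eq_ofNat_of_zero_le (show 0 ≤ m by omega)
    have e : ((n : ℤ) + 1).toNat = n + 1 := by omega
    simp only [rpoch, show (0 : ℤ) ≤ n by omega, show (0 : ℤ) ≤ n + 1 by omega, if_true, e,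
      Int.toNat_natCast, poch_succ]
    have := (poch_pos h0 h1 n).ne'
    have h2 := (fac_pos h0 h1 n).ne'
    have e2 : p ^ (2 * (n : ℤ) + 2) = p ^ (2 * n + 2) := by
      exact_mod_cast zpow_natCast p (2 * n + 2)
    rw [e2]
    field_simp

lemma rpoch_bd {p L : ℝ} (hL : 0 < L) (h : ∀ n, L ≤ poch p n) (m : ℤ) :
    0 ≤ rpoch p m ∧ rpoch p m ≤ L⁻¹ := by
  unfold rpoch
  split_ifs
  · exact ⟨inv_nonneg.2 (hL.le.trans (h _)), inv_anti₀ hL (h _)⟩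
  · exact ⟨le_rfl, by positivity⟩

lemma coef_rec {p : ℝ} (h0 : 0 < p) (h1 : p < 1) (N : ℕ) (j : ℤ) :
    poch p (2 * (N + 1)) * rpoch p ((N + 1 : ℕ) - j) * rpoch p ((N + 1 : ℕ) + j) * p ^ (j ^ 2) =
    (1 + p ^ (4 * N + 2)) * (poch p (2 * N) * rpoch p (N - j) * rpoch p (N + j) * p ^ (j ^ 2))
    + p ^ (2 * N + 1) *
      (poch p (2 * N) * rpoch p (N - (j - 1)) * rpoch p (N + (j - 1)) * p ^ ((j - 1) ^ 2))
    + p ^ (2 * N + 1) *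
      (poch p (2 * N) * rpoch p (N - (j + 1)) * rpoch p (N + (j + 1)) * p ^ ((j + 1) ^ 2)) := by
  have hp := h0.ne'
  have e1 : rpoch p (N - j) = (1 - p ^ (2 * ((N : ℤ) - j) + 2)) * rpoch p ((N + 1 : ℕ) - j) := by
    rw [rpoch_rec h0 h1]; congr 2; push_cast; ring
  have e2 : rpoch p (N + j) = (1 - p ^ (2 * ((N : ℤ) + j) + 2)) * rpoch p ((N + 1 : ℕ) + j) := by
    rw [rpoch_rec h0 h1]; congr 2; push_cast; ring
  have e3 : rpoch p (N - (j - 1)) = rpoch p ((N + 1 : ℕ) - j) := by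
    congr 1; push_cast; ring
  have e4 : rpoch p (N + (j + 1)) = rpoch p ((N + 1 : ℕ) + j) := by
    congr 1; push_cast; ring
  have e5 : rpoch p (N + (j - 1)) = (1 - p ^ (2 * ((N : ℤ) + j))) * rpoch p (N + j) := by
    have := rpoch_rec h0 h1 (N + (j - 1))
    rwa [show 2 * ((N : ℤ) + (j - 1)) + 2 = 2 * (N + j) by ring,
      show (N : ℤ) + (j - 1) + 1 = N + j by ring] at this
  have e6 : rpoch p (N - (j + 1)) = (1 - p ^ (2 * ((N : ℤ) - j))) * rpoch p (N - j) := by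
    have := rpoch_rec h0 h1 (N - (j + 1))
    rwa [show 2 * ((N : ℤ) - (j + 1)) + 2 = 2 * (N - j) by ring,
      show (N : ℤ) - (j + 1) + 1 = N - j by ring] at this
  have e7 : poch p (2 * (N + 1)) =
      poch p (2 * N) * (1 - p ^ (4 * N + 2)) * (1 - p ^ (4 * N + 4)) := by
    rw [show 2 * (N + 1) = 2 * N + 1 + 1 by ring, poch_succ, poch_succ]; ring_nf
  rw [e5, e6, e1, e2, e3, e4, e7]
  generalize rpoch p ((N + 1 : ℕ) - j) = u
  generalize rpoch p ((N + 1 : ℕ) + j) = v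
  generalize poch p (2 * N) = P
  have f1 : p ^ (2 * ((N : ℤ) - j)) = (p ^ N) ^ 2 / (p ^ j) ^ 2 := by
    rw [show 2 * ((N : ℤ) - j) = (N + N) - (j + j) by ring, zpow_sub₀ hp, zpow_add₀ hp,
      zpow_add₀ hp, zpow_natCast]; ring
  have f2 : p ^ (2 * ((N : ℤ) + j)) = (p ^ N) ^ 2 * (p ^ j) ^ 2 := by
    rw [show 2 * ((N : ℤ) + j) = (N + N) + (j + j) by ring, zpow_add₀ hp, zpow_add₀ hp,
      zpow_add₀ hp, zpow_natCast]; ring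
  have f3 : p ^ ((j - 1) ^ 2) = p ^ (j ^ 2) * p / (p ^ j) ^ 2 := by
    rw [show (j - 1) ^ 2 = j ^ 2 + 1 - (j + j) by ring, zpow_sub₀ hp, zpow_add₀ hp,
      zpow_add₀ hp, zpow_one]; ring
  have f4 : p ^ ((j + 1) ^ 2) = p ^ (j ^ 2) * p * (p ^ j) ^ 2 := by
    rw [show (j + 1) ^ 2 = j ^ 2 + 1 + (j + j) by ring, zpow_add₀ hp, zpow_add₀ hp,
      zpow_add₀ hp, zpow_one]; ring
  have g2 : p ^ (2 : ℤ) = p ^ 2 := by norm_cast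
  rw [zpow_add₀ hp, zpow_add₀ hp, f1, f2, f3, f4, g2,
    show p ^ (4 * N + 2) = (p ^ N) ^ 4 * p ^ 2 by ring,
    show p ^ (4 * N + 4) = (p ^ N) ^ 4 * p ^ 4 by ring,
    show p ^ (2 * N + 1) = (p ^ N) ^ 2 * p by ring]
  have hb : p ^ j ≠ 0 := zpow_ne_zero _ hp
  generalize p ^ (j ^ 2) = w
  generalize p ^ j = b at *
  generalize p ^ N = a
  field_simp
  ring

lemma finite_jtp {p : ℝ} (h0 : 0 < p) (h1 : p < 1) {z : ℂ} (hz : z ≠ 0) (N : ℕ) :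
    HasSum (fun j : ℤ =>
      ((poch p (2 * N) * rpoch p (N - j) * rpoch p (N + j) * p ^ (j ^ 2) : ℝ) : ℂ) * z ^ j)
      (∏ k ∈ Finset.range N, ((1 + z * (p : ℂ) ^ (2 * k + 1)) * (1 + z⁻¹ * (p : ℂ) ^ (2 * k + 1)))) := by
  induction N with
  | zero =>
    convert hasSum_single (0 : ℤ) ?_ using 1
    · simp [poch, rpoch]
    · intro j hj
      rcases lt_or_gt_of_ne hj with h | h
      · simp [rpoch, show ¬ (0 ≤ j) by omega]
      · simp [rpoch, show ¬ (j ≤ 0) by omega]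
  | succ N ih =>
    have hA := ih.mul_left (1 + (p : ℂ) ^ (4 * N + 2))
    have hB := ((Equiv.subRight (1 : ℤ)).hasSum_iff.2 ih).mul_left ((p : ℂ) ^ (2 * N + 1) * z)
    have hC := ((Equiv.addRight (1 : ℤ)).hasSum_iff.2 ih).mul_left ((p : ℂ) ^ (2 * N + 1) * z⁻¹)
    refine hasSum_cg ((hA.add hB).add hC) ?_ ?_
    · intro j
      rw [coef_rec h0 h1]
      simp only [Function.comp, Equiv.subRight_apply, Equiv.coe_addRight]
      rw [zpow_sub_one₀ hz, zpow_add_one₀ hz]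
      push_cast
      field_simp
    · rw [Finset.prod_range_succ]
      generalize ∏ k ∈ Finset.range N,
        ((1 + z * (p : ℂ) ^ (2 * k + 1)) * (1 + z⁻¹ * (p : ℂ) ^ (2 * k + 1))) = X
      field_simp
      ring

lemma jtp {p : ℝ} (h0 : 0 < p) (h1 : p < 1) {z : ℂ} (hz : z ≠ 0)
    (hs : Summable (fun j : ℤ => ‖((p ^ (j ^ 2) : ℝ) : ℂ) * z ^ j‖)) :
    Tendsto (fun N : ℕ => (poch p N : ℂ) *
      ∏ k ∈ Finset.range N, ((1 + z * (p : ℂ) ^ (2 * k + 1)) * (1 + z⁻¹ * (p : ℂ) ^ (2 * k + 1))))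
      atTop (𝓝 (∑' j : ℤ, ((p ^ (j ^ 2) : ℝ) : ℂ) * z ^ j)) := by
  obtain ⟨L, hL, hlim, hle⟩ := poch_lim h0 h1
  have key := tendsto_tsum_of_dominated_convergence (𝓕 := (atTop : Filter ℕ))
    (f := fun (N : ℕ) (j : ℤ) =>
      ((poch p N * poch p (2 * N) * rpoch p (N - j) * rpoch p (N + j) : ℝ) : ℂ) *
        (((p ^ (j ^ 2) : ℝ) : ℂ) * z ^ j))
    (g := fun j : ℤ => ((p ^ (j ^ 2) : ℝ) : ℂ) * z ^ j)
    (bound := fun j : ℤ => (L⁻¹ * L⁻¹) * ‖((p ^ (j ^ 2) : ℝ) : ℂ) * z ^ j‖)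
    (hs.mul_left _) ?_ ?_
  · refine key.congr fun N => ?_
    rw [← (finite_jtp h0 h1 hz N).tsum_eq, ← tsum_mul_left]
    refine tsum_congr fun j => ?_
    push_cast
    ring
  · intro j
    have hlim' : ∀ i : ℤ, Tendsto (fun N : ℕ => rpoch p (N + i)) atTop (𝓝 L⁻¹) := by
      intro i
      have ht : Tendsto (fun N : ℕ => ((N : ℤ) + i).toNat) atTop atTop := by
        refine tendsto_atTop.2 fun b => ?_
        filter_upwards [eventually_ge_atTop (b + i.natAbs)] with N hN
        omega
      refine ((hlim.comp ht).inv₀ hL.ne').congr' ?_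
      filter_upwards [eventually_ge_atTop i.natAbs] with N hN
      simp [rpoch, show (0 : ℤ) ≤ N + i by omega]
    have h2 : Tendsto (fun N : ℕ => poch p (2 * N)) atTop (𝓝 L) :=
      hlim.comp (tendsto_id.const_mul_atTop' (by norm_num))
    have := ((hlim.mul h2).mul (hlim' (-j))).mul (hlim' j)
    rw [show L * L * L⁻¹ * L⁻¹ = 1 by field_simp] at this
    have := ((Complex.continuous_ofReal.tendsto _).comp this).mul_const
      (((p ^ (j ^ 2) : ℝ) : ℂ) * z ^ j)
    simpa [Function.comp_def, ← sub_eq_add_neg] using this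
  · refine Eventually.of_forall fun N j => ?_
    rw [norm_mul]
    refine mul_le_mul_of_nonneg_right ?_ (norm_nonneg _)
    have a1 := rpoch_bd hL hle (N - j)
    have a2 := rpoch_bd hL hle (N + j)
    have b1 := poch_le_one h0 h1 N
    have b2 := poch_le_one h0 h1 (2 * N)
    have c1 := (poch_pos h0 h1 N).le
    have c2 := (poch_pos h0 h1 (2 * N)).le
    rw [Complex.norm_real, Real.norm_of_nonneg (by have := a1.1; have := a2.1; positivity)]
    calc _ ≤ 1 * 1 * L⁻¹ * L⁻¹ := by
          have := a1.1; have := a2.1; have := a1.2; have := a2.2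
          gcongr
      _ = _ := by ring

lemma summable_abs {q : ℝ} (h0 : 0 < q) (h1 : q < 1) : Summable (fun j : ℤ => q ^ j.natAbs) := by
  have h := summable_geometric_of_lt_one h0.le h1
  refine Summable.of_nat_of_neg ?_ ?_ <;> simpa using h

lemma zpow_le_abs {q : ℝ} (h0 : 0 < q) (h1 : q < 1) {a j : ℤ} (h : |j| ≤ a) :
    q ^ a ≤ q ^ j.natAbs := by
  rw [← zpow_natCast]
  refine zpow_le_zpow_right_of_le_one₀ h0 h1.le ?_
  simpa using h

/-- Euler's pentagonal number theorem in the form needed. -/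
lemma euler {q : ℝ} (h0 : 0 < q) (h1 : q < 1) :
    HasSum (fun k : ℤ => (-1 : ℝ) ^ k * q ^ ((6 * k + 1) ^ 2)) (q * fneg (q ^ 24)) := by
  have hq := h0.ne'
  have hp0 : 0 < q ^ 36 := by positivity
  have hp1 : q ^ 36 < 1 := pow_lt_one₀ h0.le h1 (by norm_num)
  have hz : ((-(q ^ 12) : ℝ) : ℂ) ≠ 0 := by
    rw [Complex.ofReal_ne_zero]; have : 0 < q ^ 12 := by positivity
    linarith
  have ident : ∀ j : ℤ, (q ^ 36) ^ (j ^ 2) * (-(q ^ 12)) ^ j =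
      (-1 : ℝ) ^ j * q ^ (36 * j ^ 2 + 12 * j) := by
    intro j
    rw [neg_eq_neg_one_mul, mul_zpow, ← zpow_natCast q 36, ← zpow_natCast q 12, ← zpow_mul,
      ← zpow_mul, zpow_add₀ hq]
    push_cast
    ring
  have hsR : Summable (fun j : ℤ => (-1 : ℝ) ^ j * q ^ (36 * j ^ 2 + 12 * j)) := by
    refine Summable.of_norm_bounded (summable_abs h0 h1) fun j => ?_
    rw [norm_mul, norm_zpow, norm_neg, norm_one, one_zpow, one_mul,
      Real.norm_of_nonneg (by positivity)]
    apply zpow_le_abs h0 h1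
    rw [abs_le]; constructor <;> nlinarith [sq_nonneg j, Int.le_self_sq j, Int.le_self_sq (-j)]
  have hs : Summable (fun j : ℤ =>
      ‖(((q ^ 36) ^ (j ^ 2) : ℝ) : ℂ) * ((-(q ^ 12) : ℝ) : ℂ) ^ j‖) := by
    refine hsR.norm.congr fun j => ?_
    rw [← ident, ← Complex.ofReal_zpow, ← Complex.ofReal_mul, Complex.norm_real]
  have hlim := jtp hp0 hp1 hz hs
  have h24 : Summable (fun k : ℕ => ‖-((q ^ 24) ^ (k + 1))‖) := by
    have := summable_odd (p := q ^ 24) (by positivity)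
      (pow_lt_one₀ h0.le h1 (by norm_num)) 1 1 (by norm_num)
    refine this.congr fun k => ?_
    rw [norm_neg, Real.norm_of_nonneg (by positivity), one_mul]
  have hf : Tendsto (fun n : ℕ => ∏ m ∈ Finset.range n, (1 - (q ^ 24) ^ (m + 1))) atTop
      (𝓝 (fneg (q ^ 24))) := by
    have := (multipliable_one_add_of_summable h24).hasProd.tendsto_prod_nat
    simpa only [← sub_eq_add_neg, fneg] using this
  have hf3 := hf.comp (tendsto_id.const_mul_atTop' (show 0 < 3 by norm_num))
  have hf3' := (Complex.continuous_ofReal.tendsto _).comp hf3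
  have hprod : ∀ N : ℕ, (poch (q ^ 36) N : ℂ) * ∏ k ∈ Finset.range N,
      ((1 + ((-(q ^ 12) : ℝ) : ℂ) * ((q ^ 36 : ℝ) : ℂ) ^ (2 * k + 1)) *
        (1 + ((-(q ^ 12) : ℝ) : ℂ)⁻¹ * ((q ^ 36 : ℝ) : ℂ) ^ (2 * k + 1))) =
      ((∏ m ∈ Finset.range (3 * N), (1 - (q ^ 24) ^ (m + 1)) : ℝ) : ℂ) := by
    intro N
    induction N with
    | zero => simp [poch]
    | succ N ih =>
      rw [Finset.prod_range_succ, poch_succ, show 3 * (N + 1) = 3 * N + 1 + 1 + 1 by ring,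
        Finset.prod_range_succ _ (3 * N + 1 + 1), Finset.prod_range_succ _ (3 * N + 1),
        Finset.prod_range_succ _ (3 * N), Complex.ofReal_mul, Complex.ofReal_mul,
        Complex.ofReal_mul, Complex.ofReal_mul, ← ih]
      have hc : (q : ℂ) ≠ 0 := by exact_mod_cast hq
      have hi : ((-(q ^ 12) : ℝ) : ℂ)⁻¹ * ((q ^ 36 : ℝ) : ℂ) ^ (2 * N + 1) =
          - (q : ℂ) ^ (72 * N + 24) := by
        push_cast
        rw [← pow_mul, show 36 * (2 * N + 1) = (72 * N + 24) + 12 by ring, pow_add]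
        field_simp
      rw [hi]
      push_cast
      ring
  have hlim2 := tendsto_nhds_unique hlim (hf3'.congr fun N => by
    rw [hprod]; simp [Function.comp])
  have hval : ∑' j : ℤ, (-1 : ℝ) ^ j * q ^ (36 * j ^ 2 + 12 * j) = fneg (q ^ 24) := by
    rw [← Complex.ofReal_inj, ← hlim2, Complex.ofReal_tsum]
    refine tsum_congr fun j => ?_
    rw [← ident]
    push_cast
    ring
  have := (hval ▸ hsR.hasSum).mul_left q
  refine hasSum_cg this (fun k => ?_) rfl
  rw [show (6 * k + 1) ^ 2 = 36 * k ^ 2 + 12 * k + 1 by ring, zpow_add_one₀ hq]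
  ring

lemma phi_hasSum {q : ℝ} (h0 : 0 < q) (h1 : q < 1) (d : ℕ) (hd0 : 0 < d) :
    HasSum (fun m : ℤ => (-1 : ℝ) ^ m * q ^ ((d * m) ^ 2)) (phi (-(q ^ (d ^ 2)))) := by
  have hq := h0.ne'
  have hs : Summable (fun m : ℤ => (-1 : ℝ) ^ m * q ^ ((d * m) ^ 2)) := by
    refine Summable.of_norm_bounded (summable_abs h0 h1) fun j => ?_
    rw [norm_mul, norm_zpow, norm_neg, norm_one, one_zpow, one_mul,
      Real.norm_of_nonneg (by positivity)]
    apply zpow_le_abs h0 h1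
    have : (1 : ℤ) ≤ d := by omega
    have h3 : j ^ 2 ≤ (d * j) ^ 2 := by
      rw [mul_pow]; nlinarith [sq_nonneg j, mul_nonneg (sq_nonneg j) (show (0:ℤ) ≤ d ^ 2 - 1 by nlinarith)]
    rw [abs_le]; constructor <;> nlinarith [Int.le_self_sq j, Int.le_self_sq (-j)]
  convert hs.hasSum using 1
  unfold phi
  refine tsum_congr fun m => ?_
  rw [neg_eq_neg_one_mul, mul_zpow, ← zpow_natCast q, ← zpow_mul]
  congr 1
  · rcases Int.even_or_odd m with h | h
    · rw [h.neg_one_zpow, (h.pow_of_ne_zero two_ne_zero).neg_one_zpow]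
    · rw [h.neg_one_zpow, h.pow.neg_one_zpow]
  · congr 1; push_cast; ring

/-- The twelfth root of unity with real part `s/2`. -/
noncomputable def zs (s : ℝ) : ℂ := ⟨s / 2, 1 / 2⟩

lemma zs_cube {s : ℝ} (hs : s ^ 2 = 3) : zs s ^ 3 = Complex.I := by
  have : s * s = 3 := by nlinarith
  apply Complex.ext
  · simp [zs, pow_succ]; linear_combination (s / 8) * this
  · simp [zs, pow_succ]; linear_combination (3 / 8) * this

lemma zs_ne (s : ℝ) : zs s ≠ 0 := by
  intro h
  have := congrArg Complex.im h
  simp [zs] at this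

lemma zs_norm {s : ℝ} (hs : s ^ 2 = 3) : ‖zs s‖ = 1 := by
  have h : ‖zs s‖ ^ 3 = 1 := by rw [← norm_pow, zs_cube hs, Complex.norm_I]
  exact (pow_eq_one_iff_of_nonneg (norm_nonneg _) (by norm_num)).1 h

lemma zs_inv {s : ℝ} (hs : s ^ 2 = 3) : (zs s)⁻¹ = ⟨s / 2, -(1 / 2)⟩ := by
  refine inv_eq_of_mul_eq_one_right ?_
  have : s * s = 3 := by nlinarith
  apply Complex.ext
  · simp [zs]; linear_combination (1 / 4) * this
  · simp [zs]; ring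

lemma zs_zpow {s : ℝ} (hs : s ^ 2 = 3) (k : ℤ) (r : ℕ) :
    ((zs s) ^ (6 * k + r)).re = (-1) ^ k * ((zs s) ^ r).re := by
  have h6 : zs s ^ (6 : ℤ) = ((-1 : ℝ) : ℂ) := by
    have : zs s ^ 6 = -1 := by rw [show 6 = 3 * 2 by rfl, pow_mul, zs_cube hs, Complex.I_sq]
    push_cast
    exact_mod_cast this
  rw [zpow_add₀ (zs_ne s), zpow_mul, h6, ← Complex.ofReal_zpow, Complex.re_ofReal_mul,
    zpow_natCast]

lemma sum_eval {q : ℝ} (h0 : 0 < q) (h1 : q < 1) {s : ℝ} (hs : s ^ 2 = 3) :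
    HasSum (fun j : ℤ => q ^ (j ^ 2) * ((zs s) ^ j).re)
      (-(1 / 2) * phi (-(q ^ 4)) + 3 / 2 * phi (-(q ^ 36)) + s * q * fneg (q ^ 24)) := by
  have A : HasSum (fun j : ℤ => if j % 2 = 0 then (-1 : ℝ) ^ (j / 2) * q ^ (j ^ 2) else 0)
      (phi (-(q ^ 4))) := by
    refine (Function.Injective.hasSum_iff (g := fun m : ℤ => 2 * m)
      (fun a b h => by simpa using h) ?_).1 ?_
    · intro j hj
      rw [if_neg]
      intro h
      exact hj ⟨j / 2, by simp only; omega⟩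
    · refine hasSum_cg (phi_hasSum h0 h1 2 (by norm_num)) (fun k => ?_) (by norm_num)
      simp [Function.comp]
  have B : HasSum (fun j : ℤ => if j % 6 = 0 then (-1 : ℝ) ^ (j / 6) * q ^ (j ^ 2) else 0)
      (phi (-(q ^ 36))) := by
    refine (Function.Injective.hasSum_iff (g := fun m : ℤ => 6 * m)
      (fun a b h => by simpa using h) ?_).1 ?_
    · intro j hj
      rw [if_neg]
      intro h
      exact hj ⟨j / 6, by simp only; omega⟩
    · refine hasSum_cg (phi_hasSum h0 h1 6 (by norm_num)) (fun k => ?_) (by norm_num)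
      simp [Function.comp]
  have C : HasSum (fun j : ℤ => if j % 6 = 1 then (-1 : ℝ) ^ (j / 6) * q ^ (j ^ 2) else 0)
      (q * fneg (q ^ 24)) := by
    refine (Function.Injective.hasSum_iff (g := fun m : ℤ => 6 * m + 1)
      (fun a b h => by simpa using h) ?_).1 ?_
    · intro j hj
      rw [if_neg]
      intro h
      exact hj ⟨j / 6, by simp only; omega⟩
    · refine hasSum_cg (euler h0 h1) (fun k => ?_) rfl
      simp only [Function.comp]
      rw [if_pos (by omega), show (6 * k + 1) / 6 = k by omega]
  have D := (Equiv.neg ℤ).hasSum_iff.2 C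
  have := (((A.mul_left (-(1 / 2))).add (B.mul_left (3 / 2))).add (C.mul_left (s / 2))).add
    (D.mul_left (s / 2))
  refine hasSum_cg this ?_ ?_
  · intro j
    simp only [Function.comp, Equiv.neg_apply, neg_sq]
    obtain ⟨k, r, hr, hj⟩ : ∃ (k : ℤ) (r : ℕ), r < 6 ∧ j = 6 * k + r :=
      ⟨j / 6, (j % 6).toNat, by omega, by omega⟩
    have hre : ((zs s) ^ j).re = (-1) ^ k * ((zs s) ^ r).re := by rw [hj, zs_zpow hs]
    rw [hre]
    have hss : s * s = 3 := by nlinarith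
    have h3 : (-1 : ℝ) ^ (3 * k) = (-1) ^ k := by
      rw [zpow_mul]; norm_num
    have hm : (-1 : ℝ) ≠ 0 := by norm_num
    have e3 := zs_cube hs
    interval_cases r
    · have d1 : j / 2 = 3 * k := by omega
      have d2 : j / 6 = k := by omega
      rw [if_pos (by omega), if_pos (by omega), if_neg (by omega), if_neg (by omega), d1, d2, h3]
      simp; ring
    · have d2 : j / 6 = k := by omega
      rw [if_neg (by omega), if_neg (by omega), if_pos (by omega), if_neg (by omega), d2]
      simp [zs]; ring
    · have d1 : j / 2 = 3 * k + 1 := by omega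
      rw [if_pos (by omega), if_neg (by omega), if_neg (by omega), if_neg (by omega), d1,
        zpow_add_one₀ hm, h3]
      have : (zs s ^ 2).re = 1 / 2 := by simp [zs, pow_succ]; nlinarith
      rw [this]; ring
    · rw [if_neg (by omega), if_neg (by omega), if_neg (by omega), if_neg (by omega), e3]
      simp
    · have d1 : j / 2 = 3 * k + 1 + 1 := by omega
      rw [if_pos (by omega), if_neg (by omega), if_neg (by omega), if_neg (by omega), d1,
        zpow_add_one₀ hm, zpow_add_one₀ hm, h3,
        pow_succ (zs s) 3, e3]
      simp [zs]; ring
    · have d2 : -j / 6 = -(k + 1) := by omega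
      rw [if_neg (by omega), if_neg (by omega), if_neg (by omega), if_pos (by omega), d2,
        zpow_neg, ← inv_zpow, show (-1 : ℝ)⁻¹ = -1 by norm_num, zpow_add_one₀ hm,
        pow_succ (zs s) 4, pow_succ (zs s) 3, e3]
      simp [zs]; ring
  · ring

lemma main_lim {q : ℝ} (h0 : 0 < q) (h1 : q < 1) {s : ℝ} (hs : s ^ 2 = 3) :
    Tendsto (fun N : ℕ => poch q N *
      ∏ n ∈ Finset.range N, (1 + s * q ^ (2 * n + 1) + q ^ (4 * n + 2))) atTop
      (𝓝 (-(1 / 2) * phi (-(q ^ 4)) + 3 / 2 * phi (-(q ^ 36)) + s * q * fneg (q ^ 24))) := by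
  have hsum : Summable (fun j : ℤ => ‖((q ^ (j ^ 2) : ℝ) : ℂ) * zs s ^ j‖) := by
    refine Summable.of_nonneg_of_le (fun _ => norm_nonneg _) (fun j => ?_) (summable_abs h0 h1)
    rw [norm_mul, norm_zpow, zs_norm hs, one_zpow, mul_one, Complex.norm_real,
      Real.norm_of_nonneg (by positivity)]
    apply zpow_le_abs h0 h1
    rw [abs_le]; constructor <;> nlinarith [Int.le_self_sq j, Int.le_self_sq (-j)]
  have h := (Complex.continuous_re.tendsto _).comp (jtp h0 h1 (zs_ne s) hsum)
  have hre := (Complex.hasSum_re hsum.of_norm.hasSum).unique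
    (hasSum_cg (sum_eval h0 h1 hs) (fun j => by rw [Complex.re_ofReal_mul]) rfl)
  rw [hre] at h
  refine h.congr fun N => ?_
  simp only [Function.comp]
  rw [Complex.re_ofReal_mul]
  congr 1
  have : ∀ n : ℕ, (1 + zs s * (q : ℂ) ^ (2 * n + 1)) * (1 + (zs s)⁻¹ * (q : ℂ) ^ (2 * n + 1)) =
      ((1 + s * q ^ (2 * n + 1) + q ^ (4 * n + 2) : ℝ) : ℂ) := by
    intro n
    have hsum : zs s + (zs s)⁻¹ = s := by
      rw [zs_inv hs]; apply Complex.ext <;> simp [zs]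
    have hmul : zs s * (zs s)⁻¹ = 1 := mul_inv_cancel₀ (zs_ne s)
    push_cast
    rw [← hsum]
    linear_combination (q : ℂ) ^ (4 * n + 2) * hmul
  simp_rw [this]
  rw [← Complex.ofReal_prod, Complex.ofReal_re]

/-- For every real `0 < q < 1`,
`∏_{n=0}^∞ (1 + √3 q^{2n+1} + q^{4n+2})/(1 - √3 q^{2n+1} + q^{4n+2})
  = (-φ(-q⁴) + 3φ(-q³⁶) + 2√3 q f(-q²⁴))/(-φ(-q⁴) + 3φ(-q³⁶) - 2√3 q f(-q²⁴))`,
the denominator on the right-hand side being nonzero. -/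
theorem F61_product_identity (q : ℝ) (hq0 : 0 < q) (hq1 : q < 1) :
    (-phi (-(q ^ 4)) + 3 * phi (-(q ^ 36)) - 2 * Real.sqrt 3 * q * fneg (q ^ 24)) ≠ 0 ∧
    (∏' n : ℕ, (1 + Real.sqrt 3 * q ^ (2 * n + 1) + q ^ (4 * n + 2))
        / (1 - Real.sqrt 3 * q ^ (2 * n + 1) + q ^ (4 * n + 2)))
      = (-phi (-(q ^ 4)) + 3 * phi (-(q ^ 36)) + 2 * Real.sqrt 3 * q * fneg (q ^ 24))
        / (-phi (-(q ^ 4)) + 3 * phi (-(q ^ 36)) - 2 * Real.sqrt 3 * q * fneg (q ^ 24)) := by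
  have hs3 : Real.sqrt 3 ^ 2 = 3 := Real.sq_sqrt (by norm_num)
  have hspos : 0 ≤ Real.sqrt 3 := Real.sqrt_nonneg 3
  generalize Real.sqrt 3 = s at *
  have hA := main_lim hq0 hq1 hs3
  have hB := main_lim hq0 hq1 (s := -s) (by rw [neg_sq, hs3])
  have hden : ∀ n : ℕ, 1 / 4 ≤ 1 - s * q ^ (2 * n + 1) + q ^ (4 * n + 2) := by
    intro n
    rw [show q ^ (4 * n + 2) = (q ^ (2 * n + 1)) ^ 2 by ring]
    nlinarith [sq_nonneg (q ^ (2 * n + 1) - s / 2)]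
  obtain ⟨L, hL, hlim, -⟩ := poch_lim hq0 hq1
  have hsm : Summable (fun n : ℕ => ‖-s * q ^ (2 * n + 1) + q ^ (4 * n + 2)‖) :=
    (((summable_odd hq0 hq1 2 1 (by norm_num)).mul_left (-s)).add
      (summable_odd hq0 hq1 4 2 (by norm_num))).norm
  have hne := tprod_one_add_ne_zero_of_summable
    (f := fun n : ℕ => -s * q ^ (2 * n + 1) + q ^ (4 * n + 2))
    (fun n => by have := hden n; intro h; linarith) hsm
  have hBt := (multipliable_one_add_of_summable hsm).hasProd.tendsto_prod_nat
  have hBeq := tendsto_nhds_unique hB ((hlim.mul hBt).congr fun N => by simp only [add_assoc])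
  set M := ∏' n : ℕ, (1 + (-s * q ^ (2 * n + 1) + q ^ (4 * n + 2))) with hM
  have hLM : L * M ≠ 0 := mul_ne_zero hL.ne' hne
  have hD : -phi (-(q ^ 4)) + 3 * phi (-(q ^ 36)) - 2 * s * q * fneg (q ^ 24) ≠ 0 := by
    intro h
    apply hLM
    rw [← hBeq]
    linarith
  refine ⟨hD, ?_⟩
  have hrs : Summable (fun n : ℕ =>
      ‖2 * s * q ^ (2 * n + 1) / (1 - s * q ^ (2 * n + 1) + q ^ (4 * n + 2))‖) := by
    refine Summable.of_nonneg_of_le (fun _ => norm_nonneg _) (fun n => ?_)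
      ((summable_odd hq0 hq1 2 1 (by norm_num)).mul_left (8 * s))
    have := hden n
    rw [Real.norm_of_nonneg (by positivity), div_le_iff₀ (by linarith)]
    have : 0 ≤ s * q ^ (2 * n + 1) := by positivity
    nlinarith
  have hR := (multipliable_one_add_of_summable hrs).hasProd.tendsto_prod_nat
  have hfun : ∀ n : ℕ, 1 + 2 * s * q ^ (2 * n + 1) / (1 - s * q ^ (2 * n + 1) + q ^ (4 * n + 2)) =
      (1 + s * q ^ (2 * n + 1) + q ^ (4 * n + 2))
        / (1 - s * q ^ (2 * n + 1) + q ^ (4 * n + 2)) := by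
    intro n
    have : 1 - s * q ^ (2 * n + 1) + q ^ (4 * n + 2) ≠ 0 := by have := hden n; linarith
    rw [eq_div_iff this, add_mul, div_mul_cancel₀ _ this]
    ring
  simp only [hfun] at hR
  have hq := hA.div hB (by rw [hBeq]; exact hLM)
  have := tendsto_nhds_unique hR (hq.congr fun N => ?_)
  · rw [this, div_eq_div_iff (by rw [hBeq]; exact hLM) hD]
    ring
  · simp only [Pi.div_apply]
    rw [mul_div_mul_left _ _ (poch_pos hq0 hq1 N).ne', ← Finset.prod_div_distrib]
    refine Finset.prod_congr rfl fun n _ => ?_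
    rw [neg_mul, ← sub_eq_add_neg]
end

section
/- Let x > 0 be real, set q = e^{−π/x}, β = (1+√5)/2, and α = (1−√5)/2. Then F_{(5,1)}(x) = −(π/(5x)) · log( χ(q⁵)/χ⁵(q) ) − (π/(√5 · x)) · log( Π_{m odd, m≥1} (1 − β q^m + q^{2m}) / (1 − α q^m + q^{2m}) ). -/
open Filter

/-- Ramanujan's theta function `χ(q) = ∏_{m=0}^∞ (1 + q^{2m+1})`. -/
noncomputable def chi (q : ℝ) : ℝ := ∏' m : ℕ, (1 + q ^ (2 * m + 1))

lemma hs_congr {ι E : Type*} [AddCommMonoid E] [TopologicalSpace E] {f g : ι → E} {a b : E}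
    (h : HasSum g b) (hf : ∀ i, f i = g i) (hab : a = b) : HasSum f a := by
  rw [hab, funext hf]; exact h

lemma aux_A (t : ℝ) (ht : 0 < t) :
    HasSum (fun n : ℕ => 1 / (((n:ℝ) + 1) ^ 2 + t ^ 2))
      ((Real.pi * ((1 + Real.exp (-2 * Real.pi * t)) / (1 - Real.exp (-2 * Real.pi * t))) - 1 / t)
        / (2 * t)) := by
  have hz : (Complex.I * t : ℂ) ∈ Complex.integerComplement := by
    have := UpperHalfPlane.coe_mem_integerComplement ⟨Complex.I * t, by simpa using ht⟩
    simpa using this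
  have h1 := cot_series_rep' hz
  have h2 := (summable_cotTerm hz).hasSum
  simp only [cotTerm] at h2
  rw [← h1, Complex.cot_pi_eq_exp_ratio] at h2
  rw [← Complex.hasSum_ofReal]
  have ht' : (t : ℂ) ≠ 0 := by exact_mod_cast ht.ne'
  have hE : Real.exp (-2 * Real.pi * t) < 1 := by
    rw [Real.exp_lt_one_iff]; have := Real.pi_pos; nlinarith [mul_pos this ht]
  have hE' : (1 - Complex.exp (-2 * Real.pi * t)) ≠ 0 := by
    have : (1 - Real.exp (-2 * Real.pi * t)) ≠ 0 := by linarith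
    exact_mod_cast this
  refine hs_congr (h2.mul_left (Complex.I / (2 * t))) (fun n => ?_) ?_
  · have hp : (((n:ℝ) + 1) ^ 2 + t ^ 2) ≠ 0 := by positivity
    have hp' : ((n:ℂ) + 1) ^ 2 + t ^ 2 ≠ 0 := by exact_mod_cast hp
    have e : ((n:ℂ) + 1) ^ 2 + t ^ 2 = -((Complex.I * t - (n+1)) * (Complex.I * t + (n+1))) := by
      ring_nf; rw [Complex.I_sq]; ring
    have hp2 : ((Complex.I * t - ((n:ℂ)+1)) * (Complex.I * t + ((n:ℂ)+1))) ≠ 0 := by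
      intro h; rw [e, h] at hp'; simp at hp'
    have ha := left_ne_zero_of_mul hp2
    have hb := right_ne_zero_of_mul hp2
    push_cast
    rw [e]
    field_simp
    ring_nf
    rw [Complex.I_sq]; ring
  · have : (2 * Real.pi * Complex.I * (Complex.I * t) : ℂ) = -2 * Real.pi * t := by
      ring_nf; rw [Complex.I_sq]; ring
    rw [this]
    push_cast
    have hI := Complex.I_ne_zero
    field_simp
    ring_nf

lemma aux_B (t : ℝ) (ht : 0 < t) :
    HasSum (fun m : ℤ => 1 / ((m:ℝ) ^ 2 + t ^ 2))
      (Real.pi / t * ((1 + Real.exp (-2 * Real.pi * t)) / (1 - Real.exp (-2 * Real.pi * t)))) := by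
  have hA := aux_A t ht
  have h0 : HasSum (fun n : ℕ => 1 / (((n:ℤ):ℝ) ^ 2 + t ^ 2))
    ((Real.pi * ((1 + Real.exp (-2 * Real.pi * t)) / (1 - Real.exp (-2 * Real.pi * t))) - 1 / t)
        / (2 * t) + 1 / t ^ 2) := by
    rw [← hasSum_nat_add_iff' 1]
    refine hs_congr (hA) (fun n => ?_) ?_
    · push_cast; ring
    · simp
  have h := HasSum.of_nat_of_neg_add_one (f := fun m : ℤ => 1 / ((m:ℝ) ^ 2 + t ^ 2)) h0
    (hs_congr hA (fun n => by push_cast; ring_nf) rfl)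
  convert h using 1
  field_simp
  ring

lemma aux_C (t : ℝ) (ht : 0 < t) :
    HasSum (fun m : ℤ => (-1:ℝ) ^ m / ((m:ℝ) ^ 2 + t ^ 2))
      (2 * Real.pi / t * (Real.exp (-Real.pi * t) / (1 - Real.exp (-Real.pi * t) ^ 2))) := by
  have h1 := aux_B t ht
  have h2 := (aux_B (t/2) (by positivity)).mul_left (1/2)
  have hinj : Function.Injective (fun m : ℤ => 2 * m) := fun a b h => by simpa using h
  have h3 : HasSum (fun m : ℤ => if Even m then 2 * (1 / ((m:ℝ) ^ 2 + t ^ 2)) else 0)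
      (1 / 2 * (Real.pi / (t / 2) * ((1 + Real.exp (-2 * Real.pi * (t / 2)))
        / (1 - Real.exp (-2 * Real.pi * (t / 2)))))) := by
    rw [← hinj.hasSum_iff]
    · refine hs_congr h2 (fun m => ?_) rfl
      have : (m:ℝ)^2 + (t/2)^2 ≠ 0 := by positivity
      have : (2 * m:ℝ)^2 + t^2 ≠ 0 := by positivity
      simp
      field_simp
    · intro m hm
      rw [if_neg]
      rintro ⟨k, hk⟩
      exact hm ⟨k, by simp [hk]; ring⟩
  refine hs_congr (h3.sub h1) (fun m => ?_) ?_
  · split_ifs with h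
    · rw [h.neg_one_zpow]; ring
    · rw [(Int.not_even_iff_odd.mp h).neg_one_zpow]; ring
  · have e1 : -2 * Real.pi * (t/2) = -Real.pi * t := by ring
    have e2 : Real.exp (-2 * Real.pi * t) = Real.exp (-Real.pi * t) ^ 2 := by
      rw [← Real.exp_nat_mul]; congr 1; push_cast; ring
    rw [e1, e2]
    have hE : Real.exp (-Real.pi * t) < 1 := by
      rw [Real.exp_lt_one_iff]; have := Real.pi_pos; nlinarith [mul_pos this ht]
    have hp := Real.exp_pos (-Real.pi * t)
    generalize Real.exp (-Real.pi * t) = e at *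
    have : 1 - e ≠ 0 := by linarith
    have : 1 + e ≠ 0 := by linarith
    rw [show 1 - e^2 = (1-e)*(1+e) by ring]
    field_simp
    ring

lemma aux_log (Q c : ℝ) (hQ0 : 0 < Q) (hQ : Q < 1) :
    HasSum (fun j : ℕ => (-Q) ^ j / j * (2 * Real.cos (j * c)))
      (-Real.log (1 + 2 * Real.cos c * Q + Q ^ 2)) := by
  set z : ℂ := (-Q : ℝ) * Complex.exp (c * Complex.I) with hz
  have hn : ‖z‖ < 1 := by
    rw [hz, norm_mul, Complex.norm_exp_ofReal_mul_I, Complex.norm_real]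
    simp [abs_of_pos hQ0, hQ]
  have h := (Complex.hasSum_re (Complex.hasSum_taylorSeries_neg_log hn)).mul_left 2
  have hzr : z = ⟨-Q * Real.cos c, -Q * Real.sin c⟩ := by
    apply Complex.ext <;> simp [hz, Complex.exp_re, Complex.exp_im]
  refine hs_congr (h) (fun j => ?_) ?_
  · have : z ^ j / (j:ℂ) = (((-Q) ^ j / j : ℝ) : ℂ) * Complex.exp (((j * c : ℝ) : ℂ) * Complex.I) := by
      rw [hz, mul_pow, ← Complex.exp_nat_mul]
      push_cast
      ring_nf
    rw [this, Complex.re_ofReal_mul, Complex.exp_ofReal_mul_I_re]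
    ring
  · rw [Complex.neg_re, Complex.log_re, show (1 + 2 * Real.cos c * Q + Q ^ 2) = ‖1 - z‖ ^ 2 by
      rw [← Complex.normSq_eq_norm_sq, Complex.normSq_apply, hzr]
      simp
      nlinarith [Real.sin_sq_add_cos_sq c], Real.log_pow]
    push_cast; ring

lemma cos_two_pi_div_five : Real.cos (2 * Real.pi / 5) = (√5 - 1) / 4 := by
  rw [show 2 * Real.pi / 5 = 2 * (Real.pi / 5) by ring, Real.cos_two_mul, Real.cos_pi_div_five]
  have := Real.sq_sqrt (show (0:ℝ) ≤ 5 by norm_num)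
  linarith

lemma cos_four_pi_div_five : Real.cos (4 * Real.pi / 5) = -(1 + √5) / 4 := by
  rw [show 4 * Real.pi / 5 = Real.pi - (Real.pi / 5) by ring, Real.cos_pi_sub, Real.cos_pi_div_five]
  ring

lemma cos_diff (j : ℕ) : 2 * Real.cos (j * (2 * Real.pi / 5)) - 2 * Real.cos (j * (4 * Real.pi / 5))
    = if j % 5 = 0 then 0 else if j % 5 = 1 ∨ j % 5 = 4 then √5 else -√5 := by
  have hj : (j:ℝ) = (j % 5 : ℕ) + 5 * (j / 5 : ℕ) := by exact_mod_cast (Nat.mod_add_div j 5).symm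
  have e1 : Real.cos (j * (2 * Real.pi / 5)) = Real.cos ((j % 5 : ℕ) * (2 * Real.pi / 5)) := by
    rw [← Real.cos_add_nat_mul_two_pi ((j % 5 : ℕ) * (2 * Real.pi / 5)) (j/5)]; congr 1
    linear_combination (2 * Real.pi / 5) * hj
  have e2 : Real.cos (j * (4 * Real.pi / 5)) = Real.cos ((j % 5 : ℕ) * (4 * Real.pi / 5)) := by
    rw [← Real.cos_add_nat_mul_two_pi ((j % 5 : ℕ) * (4 * Real.pi / 5)) (2 * (j/5))]; congr 1
    rw [Nat.cast_mul]; simp only [Nat.cast_ofNat]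
    linear_combination (4 * Real.pi / 5) * hj
  rw [e1, e2]
  have c6 : Real.cos (6 * Real.pi / 5) = -(1 + √5) / 4 := by
    rw [← cos_four_pi_div_five, ← Real.cos_two_pi_sub]; congr 1; ring
  have c8 : Real.cos (8 * Real.pi / 5) = (√5 - 1) / 4 := by
    rw [← cos_two_pi_div_five, ← Real.cos_two_pi_sub]; congr 1; ring
  have c12 : Real.cos (12 * Real.pi / 5) = (√5 - 1) / 4 := by
    rw [← cos_two_pi_div_five, ← Real.cos_add_two_pi (2 * Real.pi / 5)]; congr 1; ring
  have c16 : Real.cos (16 * Real.pi / 5) = -(1 + √5) / 4 := by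
    rw [← c6, ← Real.cos_add_two_pi (6 * Real.pi / 5)]; congr 1; ring
  have hlt : j % 5 < 5 := Nat.mod_lt _ (by norm_num)
  generalize j % 5 = r at *
  interval_cases r
  · simp
  · norm_num [cos_two_pi_div_five, cos_four_pi_div_five]; ring
  · norm_num
    rw [show 2 * (2 * Real.pi / 5) = 4 * Real.pi / 5 by ring, show 2 * (4 * Real.pi / 5) = 8 * Real.pi / 5 by ring, c8, cos_four_pi_div_five]; ring
  · norm_num
    rw [show 3 * (2 * Real.pi / 5) = 6 * Real.pi / 5 by ring, show 3 * (4 * Real.pi / 5) = 12 * Real.pi / 5 by ring, c6, c12]; ring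
  · norm_num
    rw [show 4 * (2 * Real.pi / 5) = 8 * Real.pi / 5 by ring, show 4 * (4 * Real.pi / 5) = 16 * Real.pi / 5 by ring, c8, c16]; ring

lemma aux_log1 (Q : ℝ) (hQ0 : 0 < Q) (hQ : Q < 1) :
    HasSum (fun j : ℕ => (-Q) ^ j / (j:ℝ)) (-Real.log (1 + Q)) := by
  have h := (aux_log Q 0 hQ0 hQ).mul_left (1/2)
  refine hs_congr (h) (fun j => ?_) ?_
  · simp; ring
  · rw [Real.cos_zero, show 1 + 2 * 1 * Q + Q ^ 2 = (1 + Q) ^ 2 by ring, Real.log_pow]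
    push_cast; ring

noncomputable def Lval (Q : ℝ) : ℝ :=
    1/10 * (5 * Real.log (1 + Q) - Real.log (1 + Q^5))
    + 1 / (2 * √5) * (Real.log (1 - (1 - √5)/2 * Q + Q ^ 2) - Real.log (1 - (1 + √5)/2 * Q + Q ^ 2))

lemma aux_E0 (Q : ℝ) (hQ0 : 0 < Q) (hQ : Q < 1) :
    HasSum (fun j : ℕ => if j % 5 = 1 ∨ j % 5 = 4 then -((-Q) ^ j / (j:ℝ)) else 0) (Lval Q) := by
  have h1 := aux_log1 Q hQ0 hQ
  have h5 := (aux_log1 (Q^5) (by positivity) (pow_lt_one₀ hQ0.le hQ (by norm_num))).mul_left (1/5)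
  have hinj : Function.Injective (fun m : ℕ => 5 * m) := fun a b h => by simpa using h
  have h5' : HasSum (fun j : ℕ => if j % 5 = 0 then (-Q) ^ j / (j:ℝ) else 0)
      (1 / 5 * -Real.log (1 + Q ^ 5)) := by
    rw [← hinj.hasSum_iff]
    · refine hs_congr h5 (fun m => ?_) rfl
      simp only [Function.comp, Nat.mul_mod_right, if_true]
      rw [pow_mul, show (-Q)^5 = -Q^5 by ring]
      push_cast
      rw [mul_comm (5:ℝ), ← div_div]; ring
    · intro m hm
      rw [if_neg]
      intro h
      exact hm ⟨m / 5, by simp; omega⟩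
  have ha := aux_log Q (2 * Real.pi / 5) hQ0 hQ
  have hb := aux_log Q (4 * Real.pi / 5) hQ0 hQ
  have hs5 : √5 ≠ 0 := by positivity
  have H := ((h1.sub h5').mul_left (-1/2)).add ((ha.sub hb).mul_left (-1 / (2 * √5)))
  refine hs_congr (H) (fun j => ?_) ?_
  · rw [← mul_sub, cos_diff]
    by_cases h0 : j % 5 = 0
    · simp [h0]
    · by_cases h1 : j % 5 = 1 ∨ j % 5 = 4
      · simp only [h0, h1, if_true, if_false]; field_simp; ring
      · simp only [h0, h1, if_false]; field_simp; ring
  · rw [cos_two_pi_div_five, cos_four_pi_div_five, Lval]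
    rw [show 1 + 2 * ((√5 - 1) / 4) * Q + Q ^ 2 = 1 - (1 - √5)/2 * Q + Q ^ 2 by ring,
      show 1 + 2 * (-(1 + √5) / 4) * Q + Q ^ 2 = 1 - (1 + √5)/2 * Q + Q ^ 2 by ring]
    ring

lemma inj5 : Function.Injective (fun n : ℤ => (5 * n + 1).natAbs) := by
  intro a b h
  simp only at h
  omega

lemma aux_E (Q : ℝ) (hQ0 : 0 < Q) (hQ : Q < 1) :
    HasSum (fun n : ℤ => (-1:ℝ) ^ n * (Q ^ (5 * n + 1).natAbs / ((5 * n + 1).natAbs : ℝ))) (Lval Q) := by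
  have h := aux_E0 Q hQ0 hQ
  rw [← inj5.hasSum_iff] at h
  · refine hs_congr h (fun n => ?_) rfl
    have hm : (5 * n + 1).natAbs % 5 = 1 ∨ (5 * n + 1).natAbs % 5 = 4 := by omega
    simp only [Function.comp, hm, if_true]
    rw [neg_pow]
    rcases Int.even_or_odd n with hn | hn
    · have : Odd (5 * n + 1).natAbs := by rw [Int.natAbs_odd]; exact (hn.mul_left 5).add_one
      rw [this.neg_one_pow, hn.neg_one_zpow]; ring
    · have : Even (5 * n + 1).natAbs := by
        rw [Int.natAbs_even]; exact (Odd.mul (by decide) hn).add_one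
      rw [this.neg_one_pow, hn.neg_one_zpow]; ring
  · intro m hm
    rw [if_neg]
    rintro (h | h)
    · exact hm ⟨m / 5, by simp only; omega⟩
    · exact hm ⟨-(m / 5) - 1, by simp only; omega⟩


lemma aux_D (x : ℝ) (hx : 0 < x) (q : ℝ) (hq : q = Real.exp (-Real.pi / x)) (n : ℤ) :
    ∑' m : ℤ, (-1 : ℝ) ^ (m + n) / ((x * m) ^ 2 + (5 * (n : ℝ) + 1) ^ 2)
      = 2 * Real.pi / x * ((-1 : ℝ) ^ n * (q ^ (5 * n + 1).natAbs / ((5 * n + 1).natAbs : ℝ)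
          * (1 / (1 - (q ^ (5 * n + 1).natAbs) ^ 2)))) := by
  have hA : 0 < (5 * n + 1).natAbs := by omega
  have hA2 : (5 * (n : ℝ) + 1) ^ 2 = ((5 * n + 1).natAbs : ℝ) ^ 2 := by
    have h : ((5 * n + 1).natAbs : ℤ) ^ 2 = (5 * n + 1) ^ 2 := Int.natAbs_sq _
    have h' : (((5 * n + 1).natAbs : ℤ) : ℝ) ^ 2 = (5 * (n:ℝ) + 1) ^ 2 := by exact_mod_cast h
    rw [← h', Int.cast_natCast]
  rw [hA2]
  generalize (5 * n + 1).natAbs = A at *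
  have hA' : (0:ℝ) < A := by exact_mod_cast hA
  have h := (aux_C (A / x) (by positivity)).mul_left ((-1 : ℝ) ^ n / x ^ 2)
  have he : Real.exp (-Real.pi * (A / x)) = q ^ A := by
    rw [hq, ← Real.exp_nat_mul]; congr 1; ring
  rw [he] at h
  refine HasSum.tsum_eq (hs_congr h (fun m => ?_) ?_)
  · rw [zpow_add₀ (by norm_num)]
    have : (x * m) ^ 2 + (A:ℝ) ^ 2 ≠ 0 := by positivity
    have : (m:ℝ) ^ 2 + ((A:ℝ) / x) ^ 2 ≠ 0 := by positivity
    field_simp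
  · field_simp


set_option maxHeartbeats 1000000 in
/-- For real `x > 0`, with `q = e^{-π/x}`, `β = (1+√5)/2`, `α = (1-√5)/2`,
`F_{(5,1)}(x) = -(π/(5x)) log(χ(q⁵)/χ⁵(q))
  - (π/(√5 x)) log(∏_{m odd} (1 - β q^m + q^{2m})/(1 - α q^m + q^{2m}))`,
the product running over odd `m ≥ 1`, i.e. `m = 2k+1` for `k = 0, 1, 2, …`. -/
theorem F51_intermediate (x : ℝ) (hx : 0 < x) (q α β : ℝ)
    (hq : q = Real.exp (-Real.pi / x))
    (hβ : β = (1 + Real.sqrt 5) / 2) (hα : α = (1 - Real.sqrt 5) / 2) :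
    Tendsto (fun N : ℕ => ∑ n ∈ Finset.Ioo (-(N : ℤ)) (N : ℤ),
        ∑' m : ℤ, (-1 : ℝ) ^ (m + n) / ((x * m) ^ 2 + (5 * (n : ℝ) + 1) ^ 2))
      atTop
      (nhds (-(Real.pi / (5 * x)) * Real.log (chi (q ^ 5) / (chi q) ^ 5)
        - Real.pi / (Real.sqrt 5 * x) *
          Real.log (∏' k : ℕ,
            (1 - β * q ^ (2 * k + 1) + q ^ (2 * (2 * k + 1)))
              / (1 - α * q ^ (2 * k + 1) + q ^ (2 * (2 * k + 1)))))) := by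
  
  have hq0 : 0 < q := hq ▸ Real.exp_pos _
  have hq1 : q < 1 := by
    rw [hq, Real.exp_lt_one_iff, neg_div]
    have := div_pos Real.pi_pos hx
    linarith
  have hQ0 : ∀ k : ℕ, 0 < q ^ (2 * k + 1) := fun k => by positivity
  have hQ1 : ∀ k : ℕ, q ^ (2 * k + 1) < 1 := fun k => pow_lt_one₀ hq0.le hq1 (by omega)
  -- the double series
  let G : ℤ × ℕ → ℝ := fun p => (-1 : ℝ) ^ p.1 *
    ((q ^ (2 * p.2 + 1)) ^ (5 * p.1 + 1).natAbs / ((5 * p.1 + 1).natAbs : ℝ))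
  have hgeo : Summable (fun k : ℕ => q ^ k) := summable_geometric_of_lt_one hq0.le hq1
  have hgeo5 : Summable (fun n : ℤ => q ^ (5 * n + 1).natAbs) := by
    have h := hgeo.comp_injective inj5
    simpa only [Function.comp_def] using h
  have hG : Summable G := by
    have hb := hgeo5.mul_of_nonneg hgeo (fun n => by positivity) (fun k => by positivity)
    refine Summable.of_norm_bounded hb (fun p => ?_)
    obtain ⟨n, k⟩ := p
    have hA : 1 ≤ (5 * n + 1).natAbs := by omega
    simp only [G]
    generalize (5 * n + 1).natAbs = A at *
    have hA' : (1:ℝ) ≤ A := by exact_mod_cast hA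
    rw [norm_mul, norm_zpow, norm_neg, norm_one, one_zpow, one_mul, Real.norm_of_nonneg (by positivity),
      ← pow_mul, ← pow_add]
    refine (div_le_self (by positivity) hA').trans (pow_le_pow_of_le_one hq0.le hq1.le ?_)
    nlinarith
  have hrow : ∀ n : ℤ, HasSum (fun k : ℕ => G (n, k)) ((-1 : ℝ) ^ n *
      (q ^ (5 * n + 1).natAbs / ((5 * n + 1).natAbs : ℝ)
          * (1 / (1 - (q ^ (5 * n + 1).natAbs) ^ 2)))) := by
    intro n
    have hA : (5 * n + 1).natAbs ≠ 0 := by omega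
    simp only [G]
    generalize (5 * n + 1).natAbs = A at *
    have h1 : q ^ A < 1 := pow_lt_one₀ hq0.le hq1 hA
    have h := ((hasSum_geometric_of_lt_one (r := (q ^ A) ^ 2) (by positivity)
      (pow_lt_one₀ (by positivity) h1 (by norm_num))).mul_left (q ^ A / A)).mul_left ((-1 : ℝ) ^ n)
    refine hs_congr h (fun k => ?_) (by rw [one_div])
    ring
  have hcol : ∀ k : ℕ, HasSum (fun n : ℤ => G (n, k)) (Lval (q ^ (2 * k + 1))) := by
    intro k
    have h := aux_E _ (hQ0 k) (hQ1 k)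
    simpa only [G] using h
  have hS1 := hG.hasSum.prod_fiberwise hrow
  have hS2 := ((Equiv.prodComm ℕ ℤ).hasSum_iff.mpr hG.hasSum).prod_fiberwise hcol
  -- the products
  have hodd : Summable (fun k : ℕ => q ^ (2 * k + 1)) :=
    hgeo.comp_injective (fun a b h => by simpa using h)
  have hodd5 : Summable (fun k : ℕ => (q ^ 5) ^ (2 * k + 1)) :=
    (summable_geometric_of_lt_one (by positivity)
      (pow_lt_one₀ hq0.le hq1 (by norm_num : 5 ≠ 0))).comp_injective
      (fun a b (h : 2 * a + 1 = 2 * b + 1) => by omega)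
  have hl1 := Real.summable_log_one_add_of_summable hodd
  have hl5 := Real.summable_log_one_add_of_summable hodd5
  have hc1 : chi q = Real.exp (∑' k : ℕ, Real.log (1 + q ^ (2 * k + 1))) :=
    (Real.rexp_tsum_eq_tprod (fun k => by positivity) hl1).symm
  have hc5 : chi (q ^ 5) = Real.exp (∑' k : ℕ, Real.log (1 + (q ^ 5) ^ (2 * k + 1))) :=
    (Real.rexp_tsum_eq_tprod (fun k => by positivity) hl5).symm
  have hs5 : 0 < √5 := by positivity
  have hsq : √5 ^ 2 = 5 := Real.sq_sqrt (by norm_num)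
  have hpb : ∀ Q : ℝ, 0 < 1 - β * Q + Q ^ 2 := by
    intro Q; rw [hβ]
    have : √5 < 3 := by nlinarith
    nlinarith [sq_nonneg (Q - (1 + √5) / 4), sq_nonneg Q]
  have hpa : ∀ Q : ℝ, 0 < 1 - α * Q + Q ^ 2 := by
    intro Q; rw [hα]
    nlinarith [sq_nonneg (Q - (1 - √5) / 4), sq_nonneg Q]
  have hterm : ∀ k : ℕ, Real.log ((1 - β * q ^ (2 * k + 1) + q ^ (2 * (2 * k + 1)))
              / (1 - α * q ^ (2 * k + 1) + q ^ (2 * (2 * k + 1))))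
      = √5 / 5 * (5 * Real.log (1 + q ^ (2 * k + 1)) - Real.log (1 + (q ^ 5) ^ (2 * k + 1)))
        - 2 * √5 * Lval (q ^ (2 * k + 1)) := by
    intro k
    rw [show q ^ (2 * (2 * k + 1)) = (q ^ (2 * k + 1)) ^ 2 by ring,
      show (q ^ 5) ^ (2 * k + 1) = (q ^ (2 * k + 1)) ^ 5 by ring,
      Real.log_div (hpb _).ne' (hpa _).ne', Lval, ← hα, ← hβ]
    field_simp
    ring
  have hlr := ((((hl1.hasSum.mul_left 5).sub hl5.hasSum).mul_left (√5 / 5)).sub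
    (hS2.mul_left (2 * √5)))
  have hlr' := hs_congr hlr hterm rfl
  have hpr := (Real.hasProd_of_hasSum_log (fun k => by
    have h1 := hpb (q ^ (2 * k + 1))
    have h2 := hpa (q ^ (2 * k + 1))
    rw [show q ^ (2 * (2 * k + 1)) = (q ^ (2 * k + 1)) ^ 2 by ring]
    exact div_pos h1 h2) hlr').tprod_eq
  rw [hpr, Real.log_exp, hc1, hc5, Real.log_div (Real.exp_ne_zero _) (by positivity), Real.log_pow,
    Real.log_exp, Real.log_exp]
  have hfin := (hS1.mul_left (2 * Real.pi / x)).comp (Finset.tendsto_Ioo_neg (R := ℤ))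
  simp_rw [aux_D x hx q hq]
  have fin : ∀ {a b : ℝ} {f : ℕ → ℝ}, Tendsto f atTop (nhds a) → b = a → Tendsto f atTop (nhds b) :=
    fun h e => e ▸ h
  refine fin hfin ?_
  push_cast
  field_simp
  ring
end
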